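/- Let n be a nonempty finite type and let ρ ∈ Matrix n n ℂ be Hermitian with Tr ρ = 1. Then (‖ρ‖₁ - 1)/2 is the least element of the set {s : ℝ | s ≥ 0 ∧ ∃ δ ∈ Matrix n n ℂ, δ is a density matrix and (1+s) • δ - ρ is positive semidefinite}. That is, the semidefinite-programming form min{ s ≥ 0 : ρ ≤ (1+s)δ, δ a density matrix } of the robustness of non-Markovianity equals (‖ρ‖₁ - 1)/2, and the minimum is attained. -/

import Mathlib

/-!
Replacing `(1 + s) • δ` by a single matrix `X`, the program asks for the least trace of a positive
semidefinite `X ≥ ρ`. The positive part `ρ⁺` is such an `X`. It is optimal: if `P` is the spectral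
projection of `ρ` onto its positive eigenspaces, then `0 ≤ P ≤ 1` and `P ρ = ρ⁺`, so
`Tr ρ⁺ = Tr (P ρ) ≤ Tr (P X) ≤ Tr X`. Finally `|ρ| + ρ = 2 ρ⁺` gives `1 + s = (‖ρ‖₁ + 1) / 2`.
-/

open Matrix
open scoped ComplexOrder

open scoped MatrixOrder in
/-- The trace norm of a matrix: the trace of the positive semidefinite square root of `AᴴA`. -/
noncomputable def traceNorm {n : Type*} [Fintype n] [DecidableEq n] (A : Matrix n n ℂ) : ℝ :=
  ((CFC.sqrt (Aᴴ * A)).trace).re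

/-- A density matrix: positive semidefinite with unit trace. -/
def IsDensityMatrix {n : Type*} [Fintype n] (ρ : Matrix n n ℂ) : Prop :=
  ρ.PosSemidef ∧ ρ.trace = 1

section PosPart

open scoped MatrixOrder

variable {𝕜 n : Type*} [RCLike 𝕜] [Fintype n] {A B P : Matrix n n 𝕜}

theorem trace_le_trace (hAB : A ≤ B) : A.trace ≤ B.trace :=
  OrderHomClass.mono (tracePositiveLinearMap n 𝕜 𝕜) hAB

theorem trace_mul_nonneg (hA : 0 ≤ A) (hB : 0 ≤ B) : 0 ≤ (A * B).trace := by
  classical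
  obtain ⟨C, rfl⟩ := CStarAlgebra.nonneg_iff_eq_star_mul_self.mp hA
  rw [mul_assoc, trace_mul_comm]
  exact (hB.posSemidef.mul_mul_conjTranspose_same C).trace_nonneg

theorem trace_mul_le_trace_mul_of_nonneg_left (hAB : A ≤ B) (hP : 0 ≤ P) :
    (P * A).trace ≤ (P * B).trace := by
  rw [← sub_nonneg, ← trace_sub, ← mul_sub]
  exact trace_mul_nonneg hP (sub_nonneg.2 hAB)

variable [DecidableEq n]

theorem trace_mul_le_trace_of_le_one (hP : P ≤ 1) (hB : 0 ≤ B) : (P * B).trace ≤ B.trace := by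
  simpa only [trace_mul_comm B, one_mul] using trace_mul_le_trace_mul_of_nonneg_left hP hB

theorem exists_nonneg_le_one_mul_eq_posPart (hA : A.IsHermitian) :
    ∃ P : Matrix n n 𝕜, 0 ≤ P ∧ P ≤ 1 ∧ P * A = A⁺ := by
  have hA' : IsSelfAdjoint A := hA
  let χ : ℝ → ℝ := (Set.Ioi 0).indicator 1
  -- The jump of `χ` at `0` is harmless because the spectrum is finite, hence discrete.
  have hχ : ContinuousOn χ (spectrum ℝ A) := A.finite_real_spectrum.continuousOn χ
  refine ⟨cfc χ A, cfc_nonneg fun x _ ↦ Set.indicator_nonneg (fun _ _ ↦ zero_le_one) x,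
    cfc_le_one χ A fun x _ ↦ Set.indicator_le_self' (fun _ _ ↦ zero_le_one) x, ?_⟩
  have hmul : (fun x ↦ χ x * x) = (·⁺ : ℝ → ℝ) := by
    funext x
    rcases le_or_gt x 0 with hx | hx
    · simp [χ, hx]
    · simp [χ, hx, hx.le]
  calc cfc χ A * A = cfc χ A * cfc (fun x : ℝ ↦ x) A := by rw [cfc_id' ℝ A]
    _ = cfc (·⁺ : ℝ → ℝ) A := by rw [← cfc_mul χ (fun x ↦ x) A, hmul]
    _ = A⁺ := by rw [CFC.posPart_def, cfcₙ_eq_cfc]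

theorem isLeast_trace_posPart (hA : A.IsHermitian) :
    IsLeast (trace '' {B : Matrix n n 𝕜 | 0 ≤ B ∧ A ≤ B}) (A⁺).trace := by
  refine ⟨⟨A⁺, ⟨CFC.posPart_nonneg A, CFC.le_posPart hA⟩, rfl⟩, ?_⟩
  rintro _ ⟨B, ⟨hB, hAB⟩, rfl⟩
  obtain ⟨P, hP, hP_le, hPA⟩ := exists_nonneg_le_one_mul_eq_posPart hA
  calc (A⁺).trace = (P * A).trace := by rw [hPA]
    _ ≤ (P * B).trace := trace_mul_le_trace_mul_of_nonneg_left hAB hP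
    _ ≤ B.trace := trace_mul_le_trace_of_le_one hP_le hB

end PosPart

section TraceNorm

open scoped MatrixOrder

variable {n : Type*} [Fintype n] [DecidableEq n] {A : Matrix n n ℂ}

theorem ofReal_traceNorm (A : Matrix n n ℂ) : (traceNorm A : ℂ) = (CFC.abs A).trace :=
  (Complex.eq_re_of_ofReal_le (CFC.abs_nonneg A).posSemidef.trace_nonneg).symm

theorem trace_posPart (hA : A.IsHermitian) : (A⁺).trace = (traceNorm A + A.trace) / 2 := by
  rw [ofReal_traceNorm, ← trace_add, CFC.abs_add_self A hA, trace_smul, nsmul_eq_mul,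
    Nat.cast_ofNat, mul_div_cancel_left₀ _ two_ne_zero]

theorem trace_le_traceNorm (hA : A.IsHermitian) : A.trace ≤ traceNorm A := by
  rw [ofReal_traceNorm]
  refine trace_le_trace (sub_nonneg.1 ?_)
  rw [CFC.abs_sub_self A hA]
  exact nsmul_nonneg (CFC.negPart_nonneg A) 2

end TraceNorm

namespace IsDensityMatrix

variable {n : Type*} [Fintype n] {δ B : Matrix n n ℂ}

theorem trace_real_smul (hδ : IsDensityMatrix δ) (t : ℝ) : (t • δ).trace = t := by
  rw [trace_smul, hδ.2, Complex.real_smul, mul_one]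

theorem inv_smul_of_posSemidef (hB : B.PosSemidef) {t : ℝ} (htr : B.trace = t) (ht : t ≠ 0) :
    IsDensityMatrix (t⁻¹ • B) := by
  have ht_nonneg : 0 ≤ t := Complex.zero_le_real.1 (htr ▸ hB.trace_nonneg)
  refine ⟨hB.smul (inv_nonneg.2 ht_nonneg), ?_⟩
  rw [trace_smul, htr, Complex.real_smul, ← Complex.ofReal_mul, inv_mul_cancel₀ ht,
    Complex.ofReal_one]

end IsDensityMatrix

/-- The semidefinite-programming form `min { s ≥ 0 | ρ ≤ (1+s)δ, δ a density matrix }` of the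
robustness of non-Markovianity equals `(‖ρ‖₁ - 1)/2`, and the minimum is attained. -/
theorem robustness_sdp_form {n : Type*} [Fintype n] [DecidableEq n] [Nonempty n]
    (ρ : Matrix n n ℂ) (hρ : ρ.IsHermitian) (htr : ρ.trace = 1) :
    IsLeast {s : ℝ | 0 ≤ s ∧ ∃ δ : Matrix n n ℂ, IsDensityMatrix δ ∧
        ((1 + s) • δ - ρ).PosSemidef}
      ((traceNorm ρ - 1) / 2) := by
  open scoped MatrixOrder in
  obtain ⟨⟨X, ⟨hX, hρX⟩, htrX⟩, hmin⟩ := isLeast_trace_posPart hρ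
  have htr_posPart : (ρ⁺).trace = ((1 + (traceNorm ρ - 1) / 2 : ℝ) : ℂ) := by
    rw [trace_posPart hρ, htr]
    push_cast
    ring
  have one_le_traceNorm : 1 ≤ traceNorm ρ := by exact_mod_cast htr ▸ trace_le_traceNorm hρ
  have hne : 1 + (traceNorm ρ - 1) / 2 ≠ 0 := by linarith
  constructor
  · refine ⟨by linarith, (1 + (traceNorm ρ - 1) / 2)⁻¹ • X,
      .inv_smul_of_posSemidef hX.posSemidef (htrX.trans htr_posPart) hne, ?_⟩
    rwa [smul_inv_smul₀ hne]
  · rintro s ⟨hs, δ, hδ, hle⟩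
    have hnonneg : 0 ≤ (1 + s) • δ := (hδ.1.smul (by linarith)).nonneg
    have htr_le : (ρ⁺).trace ≤ ((1 + s) • δ).trace := hmin ⟨_, ⟨hnonneg, hle⟩, rfl⟩
    rw [htr_posPart, hδ.trace_real_smul, Complex.real_le_real] at htr_le
    linarith
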